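/- Let p > 3 be a prime. Then ∑_{k=1}^{(p-1)/2} 1/(k(2k-1)) ≡ 4·q_p(2) - 2p·q_p(2)^2 modulo p^2 (as rational numbers). -/

import Mathlib

/-- Two rationals `a` and `b` are congruent modulo `p^r`:
the `p`-adic valuation of `a - b` is at least `r`, i.e. `a - b = c * p^r`
with the denominator of `c` not divisible by `p`. -/
def ratCongr (p r : ℕ) (a b : ℚ) : Prop :=
  ∃ c : ℚ, a - b = c * (p : ℚ) ^ r ∧ ¬ (p ∣ c.den)

/-- The Fermat quotient `q_p(2) = (2^(p-1) - 1)/p` (an integer for odd primes),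
viewed as a rational number. -/
def fermatQ (p : ℕ) : ℚ := ((2 : ℚ) ^ (p - 1) - 1) / p

open Finset

/-- The rational number `x` is `p`-integral and reduces to `z` modulo `p`. -/
def ReducesTo (p : ℕ) (x : ℚ) (z : ZMod p) : Prop :=
  ∃ a b : ℤ, (b : ZMod p) ≠ 0 ∧ x * b = a ∧ z * b = a

/-- The partial harmonic sum over `0 < m < n`. -/
def harmonicBelow (K : Type*) [Field K] (n : ℕ) : K := ∑ m ∈ range n, (m : K)⁻¹

/-- The alternating harmonic sum over `0 < n < p`. -/
def altHarmonic (K : Type*) [Field K] (p : ℕ) : K := ∑ n ∈ range p, (-1) ^ n * (n : K)⁻¹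

/-- The alternating double harmonic sum over `0 < m < n < p`. -/
def altDoubleHarmonic (K : Type*) [Field K] (p : ℕ) : K :=
  ∑ n ∈ range p, (-1) ^ n * (n : K)⁻¹ * harmonicBelow K n

namespace ReducesTo

variable {p : ℕ}

theorem intCast [Fact p.Prime] (a : ℤ) : ReducesTo p a a :=
  ⟨a, 1, by simp, by simp, by simp⟩

theorem natCast [Fact p.Prime] (n : ℕ) : ReducesTo p n n := by
  exact_mod_cast intCast (p := p) n

theorem add [Fact p.Prime] {x y : ℚ} {z w : ZMod p} (hx : ReducesTo p x z)
    (hy : ReducesTo p y w) : ReducesTo p (x + y) (z + w) := by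
  obtain ⟨a, b, hb, h₁, h₂⟩ := hx
  obtain ⟨c, d, hd, h₃, h₄⟩ := hy
  refine ⟨a * d + c * b, b * d, by push_cast; exact mul_ne_zero hb hd, ?_, ?_⟩
  · push_cast; rw [← h₁, ← h₃]; ring
  · push_cast; rw [← h₂, ← h₄]; ring

theorem mul [Fact p.Prime] {x y : ℚ} {z w : ZMod p} (hx : ReducesTo p x z)
    (hy : ReducesTo p y w) : ReducesTo p (x * y) (z * w) := by
  obtain ⟨a, b, hb, h₁, h₂⟩ := hx
  obtain ⟨c, d, hd, h₃, h₄⟩ := hy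
  refine ⟨a * c, b * d, by push_cast; exact mul_ne_zero hb hd, ?_, ?_⟩
  · push_cast; rw [← h₁, ← h₃]; ring
  · push_cast; rw [← h₂, ← h₄]; ring

theorem neg [Fact p.Prime] {x : ℚ} {z : ZMod p} (hx : ReducesTo p x z) :
    ReducesTo p (-x) (-z) := by
  simpa using (intCast (p := p) (-1)).mul hx

theorem sub [Fact p.Prime] {x y : ℚ} {z w : ZMod p} (hx : ReducesTo p x z)
    (hy : ReducesTo p y w) : ReducesTo p (x - y) (z - w) := by
  simpa [sub_eq_add_neg] using hx.add hy.neg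

theorem sum [Fact p.Prime] {ι : Type*} (s : Finset ι) {f : ι → ℚ} {g : ι → ZMod p}
    (h : ∀ i ∈ s, ReducesTo p (f i) (g i)) : ReducesTo p (∑ i ∈ s, f i) (∑ i ∈ s, g i) := by
  classical
  induction s using Finset.induction_on with
  | empty => simpa using intCast (p := p) 0
  | insert i s hi ih =>
    rw [sum_insert hi, sum_insert hi]
    exact (h i (mem_insert_self i s)).add (ih fun j hj => h j (mem_insert_of_mem hj))

theorem inv_natCast [Fact p.Prime] {n : ℕ} (hn : n < p) :
    ReducesTo p (n : ℚ)⁻¹ (n : ZMod p)⁻¹ := by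
  rcases Nat.eq_zero_or_pos n with rfl | hpos
  · simpa using intCast (p := p) 0
  · have hz : (n : ZMod p) ≠ 0 := by
      rw [Ne, ZMod.natCast_eq_zero_iff]
      exact Nat.not_dvd_of_pos_of_lt hpos hn
    have hq : (n : ℚ) ≠ 0 := by exact_mod_cast hpos.ne'
    exact ⟨1, n, by simpa using hz, by simp [hq], by simp [hz]⟩

theorem neg_one_pow [Fact p.Prime] (n : ℕ) : ReducesTo p ((-1) ^ n) ((-1) ^ n) := by
  simpa using intCast (p := p) ((-1) ^ n)

theorem not_dvd_den [Fact p.Prime] {x : ℚ} {z : ZMod p} (hx : ReducesTo p x z) :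
    ¬ p ∣ x.den := by
  obtain ⟨a, b, hb, h, -⟩ := hx
  intro hd
  have hb0 : (b : ℚ) ≠ 0 := by
    rintro h0
    apply hb
    rw [Int.cast_eq_zero.mp h0, Int.cast_zero]
  have hxab : x = Rat.divInt a b := by
    rw [Rat.divInt_eq_div, ← h, mul_div_cancel_right₀ _ hb0]
  apply hb
  rw [ZMod.intCast_zmod_eq_zero_iff_dvd]
  refine (Int.natCast_dvd_natCast.mpr hd).trans ?_
  rw [hxab]
  exact Rat.den_dvd a b

theorem exists_eq_mul_of_zero [Fact p.Prime] {x : ℚ} (hx : ReducesTo p x 0) :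
    ∃ (c : ℚ) (z : ZMod p), x = p * c ∧ ReducesTo p c z := by
  obtain ⟨a, b, hb, h, h'⟩ := hx
  have hb0 : (b : ℚ) ≠ 0 := by
    rintro h0
    apply hb
    rw [Int.cast_eq_zero.mp h0, Int.cast_zero]
  rw [zero_mul] at h'
  obtain ⟨k, rfl⟩ := (ZMod.intCast_zmod_eq_zero_iff_dvd a p).mp h'.symm
  refine ⟨k / b, k / b, ?_, k, b, hb, by field_simp, by field_simp⟩
  push_cast at h
  field_simp
  exact h

theorem harmonicBelow [Fact p.Prime] {n : ℕ} (hn : n ≤ p) :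
    ReducesTo p (harmonicBelow ℚ n) (harmonicBelow (ZMod p) n) :=
  sum _ fun _ hm => inv_natCast ((mem_range.mp hm).trans_le hn)

theorem altHarmonic [Fact p.Prime] :
    ReducesTo p (altHarmonic ℚ p) (altHarmonic (ZMod p) p) :=
  sum _ fun n hn => (neg_one_pow n).mul (inv_natCast (mem_range.mp hn))

theorem altDoubleHarmonic [Fact p.Prime] :
    ReducesTo p (altDoubleHarmonic ℚ p) (altDoubleHarmonic (ZMod p) p) :=
  sum _ fun n hn => ((neg_one_pow n).mul (inv_natCast (mem_range.mp hn))).mul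
    (harmonicBelow (mem_range.mp hn).le)

end ReducesTo

theorem ZMod.sum_eq_sum_range {M : Type*} [AddCommMonoid M] (p : ℕ) [NeZero p]
    (f : ZMod p → M) : ∑ x, f x = ∑ n ∈ range p, f n := by
  refine sum_bij' (fun x _ => x.val) (fun n _ => (n : ZMod p)) ?_ ?_ ?_ ?_ ?_
  · exact fun x _ => mem_range.mpr x.val_lt
  · exact fun _ _ => mem_univ _
  · exact fun x _ => ZMod.natCast_zmod_val x
  · exact fun n hn => ZMod.val_cast_of_lt (mem_range.mp hn)
  · exact fun x _ => by rw [ZMod.natCast_zmod_val]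

section AlternatingSign

variable {p : ℕ} [Fact p.Prime]

/-- The parity sign of the least nonnegative residue. -/
def residueSign (x : ZMod p) : ZMod p := (-1) ^ x.val

theorem residueSign_mul_self (x : ZMod p) : residueSign x * residueSign x = 1 := by
  rw [residueSign, ← mul_pow]; simp

theorem residueSign_neg (hp : Odd p) {x : ZMod p} (hx : x ≠ 0) :
    residueSign (-x) = -residueSign x := by
  have h : (-x).val + x.val = p := by
    have : NeZero x := ⟨hx⟩
    rw [ZMod.val_neg_of_ne_zero]
    exact Nat.sub_add_cancel x.val_lt.le
  have h1 : residueSign (-x) * residueSign x = -1 := by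
    rw [residueSign, residueSign, ← pow_add, h, hp.neg_one_pow]
  calc residueSign (-x) = residueSign (-x) * residueSign x * residueSign x := by
        rw [mul_assoc, residueSign_mul_self, mul_one]
    _ = -residueSign x := by rw [h1]; ring

theorem residueSign_mul_residueSign_sub (hp : Odd p) (x t : ZMod p) :
    residueSign x * residueSign (t - x) =
      if x.val ≤ t.val then residueSign t else -residueSign t := by
  split_ifs with h
  · rw [residueSign, residueSign, ← pow_add, ZMod.val_sub h, Nat.add_sub_cancel' h]; rfl
  · have hxt : x - t ≠ 0 := by
      intro h0
      rw [sub_eq_zero.mp h0] at h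
      exact h le_rfl
    have hsub : residueSign (x - t) * residueSign t = residueSign x := by
      rw [residueSign, residueSign, ← pow_add, ZMod.val_sub (by omega),
        Nat.sub_add_cancel (by omega)]; rfl
    rw [← neg_sub x t, residueSign_neg hp hxt, ← hsub]
    linear_combination (-residueSign t) * residueSign_mul_self (x - t)

theorem altHarmonic_eq_sum_residueSign :
    altHarmonic (ZMod p) p = ∑ x : ZMod p, residueSign x * x⁻¹ := by
  rw [ZMod.sum_eq_sum_range, altHarmonic]
  refine sum_congr rfl fun n hn => ?_
  rw [residueSign, ZMod.val_cast_of_lt (mem_range.mp hn)]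

theorem altDoubleHarmonic_eq_sum_residueSign :
    altDoubleHarmonic (ZMod p) p =
      ∑ t : ZMod p, ∑ x : ZMod p, if x.val < t.val then residueSign t * t⁻¹ * x⁻¹ else 0 := by
  rw [ZMod.sum_eq_sum_range, altDoubleHarmonic]
  refine sum_congr rfl fun n hn => ?_
  have hn' := mem_range.mp hn
  rw [ZMod.sum_eq_sum_range, harmonicBelow, mul_sum, residueSign, ZMod.val_cast_of_lt hn',
    ← sum_filter]
  refine sum_congr ?_ fun _ _ => rfl
  ext m
  simp only [mem_range, mem_filter]
  constructor
  · intro hm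
    exact ⟨by omega, by rwa [ZMod.val_cast_of_lt (by omega)]⟩
  · rintro ⟨hm, h⟩
    rwa [ZMod.val_cast_of_lt hm] at h

/-- Reflecting both indices turns the sum over `t < x` into minus the sum over `x < t`. -/
theorem sum_residueSign_reflect (hp : Odd p) :
    (∑ t : ZMod p, ∑ x : ZMod p, if t.val < x.val then residueSign t * t⁻¹ * x⁻¹ else 0) =
      -altDoubleHarmonic (ZMod p) p := by
  rw [altDoubleHarmonic_eq_sum_residueSign, ← sum_neg_distrib,
    ← Equiv.sum_comp (Equiv.neg (ZMod p))]
  refine sum_congr rfl fun t _ => ?_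
  rw [← sum_neg_distrib, ← Equiv.sum_comp (Equiv.neg (ZMod p))]
  refine sum_congr rfl fun x _ => ?_
  simp only [Equiv.neg_apply]
  rcases eq_or_ne t 0 with rfl | ht
  · simp
  rcases eq_or_ne x 0 with rfl | hx
  · simp
  have : NeZero t := ⟨ht⟩
  have : NeZero x := ⟨hx⟩
  have h1 := t.val_lt
  have h2 := x.val_lt
  rw [ZMod.val_neg_of_ne_zero, ZMod.val_neg_of_ne_zero, residueSign_neg hp ht, inv_neg, inv_neg]
  by_cases h : x.val < t.val
  · rw [if_pos h, if_pos (by omega)]; ring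
  · rw [if_neg h, if_neg (by omega), neg_zero]

theorem sum_inv_sq_eq_zero (hp3 : 3 < p) : ∑ x : ZMod p, x⁻¹ * x⁻¹ = 0 := by
  have h := FiniteField.sum_pow_lt_card_sub_one (K := ZMod p) 2 (by rw [ZMod.card]; omega)
  rw [← h]
  refine Fintype.sum_bijective (fun x : ZMod p => x⁻¹) inv_involutive.bijective _ _ fun x => ?_
  ring

theorem altHarmonic_sq (hp3 : 3 < p) :
    altHarmonic (ZMod p) p ^ 2 = 4 * altDoubleHarmonic (ZMod p) p := by
  have hodd : Odd p := (Fact.out : p.Prime).odd_of_ne_two (by omega)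
  set W : ZMod p → ZMod p → ZMod p := fun x y =>
    if y = 0 then 0 else residueSign x * residueSign y * (x⁻¹ * (x + y)⁻¹) with hW
  have hterm : ∀ x y : ZMod p, residueSign x * x⁻¹ * (residueSign y * y⁻¹) =
      W x y + W y x + if y = -x then x⁻¹ * x⁻¹ else 0 := by
    intro x y
    simp only [hW]
    rcases eq_or_ne x 0 with rfl | hx
    · simp
    rcases eq_or_ne y 0 with rfl | hy
    · simp
    rw [if_neg hx, if_neg hy]
    by_cases hxy : y = -x
    · subst hxy
      rw [if_pos rfl, residueSign_neg hodd hx, inv_neg, add_neg_cancel, neg_add_cancel, inv_zero]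
      linear_combination (x⁻¹ * x⁻¹) * residueSign_mul_self x
    · have hs : x + y ≠ 0 := fun h => hxy (eq_neg_of_add_eq_zero_right h)
      rw [if_neg hxy, add_comm y x]
      field_simp
      ring
  have hWsum : ∑ x, ∑ y, W x y = 2 * altDoubleHarmonic (ZMod p) p := by
    have hshift : ∀ x, ∑ y, W x y = ∑ t, W x (t - x) := fun x =>
      (Equiv.sum_comp (Equiv.subRight x) (W x)).symm
    have hsplit : ∀ x t : ZMod p, W x (t - x) =
        (if x.val < t.val then residueSign t * t⁻¹ * x⁻¹ else 0) -
          if t.val < x.val then residueSign t * t⁻¹ * x⁻¹ else 0 := by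
      intro x t
      simp only [hW]
      rw [residueSign_mul_residueSign_sub hodd, add_sub_cancel]
      rcases lt_trichotomy x.val t.val with h | h | h
      · have : t - x ≠ 0 := by
          intro h0; rw [sub_eq_zero.mp h0] at h; exact lt_irrefl _ h
        rw [if_neg this, if_pos h.le, if_pos h, if_neg h.not_gt]; ring
      · rw [if_pos (sub_eq_zero.mpr (ZMod.val_injective p h.symm)), h]; simp
      · have : t - x ≠ 0 := by
          intro h0; rw [sub_eq_zero.mp h0] at h; exact lt_irrefl _ h
        rw [if_neg this, if_neg h.not_ge, if_neg h.not_gt, if_pos h]; ring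
    simp only [hshift, hsplit]
    rw [sum_comm]
    simp only [sum_sub_distrib]
    rw [sum_residueSign_reflect hodd, ← altDoubleHarmonic_eq_sum_residueSign]
    ring
  rw [sq, altHarmonic_eq_sum_residueSign, sum_mul_sum]
  simp only [hterm, sum_add_distrib, sum_ite_eq', mem_univ, if_true]
  rw [sum_inv_sq_eq_zero hp3, sum_comm (f := fun x y => W y x), hWsum]
  ring

end AlternatingSign

theorem sum_inv_mul_eq_altHarmonic (m : ℕ) :
    ∑ k ∈ Icc 1 m, 1 / ((k : ℚ) * (2 * k - 1)) = -2 * altHarmonic ℚ (2 * m + 1) := by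
  induction m with
  | zero => simp [altHarmonic]
  | succ m ih =>
    rw [sum_Icc_succ_top (by omega), ih, altHarmonic, altHarmonic,
      show 2 * (m + 1) + 1 = 2 * m + 1 + 1 + 1 by ring, sum_range_succ _ (2 * m + 1 + 1),
      sum_range_succ _ (2 * m + 1)]
    have h1 : (2 * (m : ℚ) + 1) ≠ 0 := by positivity
    have h2 : ((m : ℚ) + 1) ≠ 0 := by positivity
    have h3 : (2 * ((m : ℚ) + 1) - 1) ≠ 0 := by
      rw [show 2 * ((m : ℚ) + 1) - 1 = 2 * m + 1 by ring]; exact h1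
    have h4 : (2 * (m : ℚ) + 1 + 1) ≠ 0 := by positivity
    rw [pow_succ _ (2 * m + 1), pow_succ, pow_mul]
    push_cast
    norm_num
    field_simp
    ring

theorem choose_sub_one_expansion {p : ℕ} [Fact p.Prime] {n : ℕ} (hn : n < p) :
    ∃ (c : ℚ) (z : ZMod p), ReducesTo p c z ∧
      ((p - 1).choose n : ℚ) = (-1) ^ n * (1 - p * harmonicBelow ℚ (n + 1) + p ^ 2 * c) := by
  induction n with
  | zero => exact ⟨0, 0, by simpa using ReducesTo.intCast (p := p) 0, by simp [harmonicBelow]⟩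
  | succ n ih =>
    obtain ⟨c, z, hc, h⟩ := ih (by omega)
    have hi := ReducesTo.inv_natCast hn
    have hH := ReducesTo.harmonicBelow hn.le
    refine ⟨_, _, (hc.add (hi.mul hH)).sub (((ReducesTo.natCast p).mul hi).mul hc), ?_⟩
    have hrec : ((p - 1).choose (n + 1) : ℚ) * (n + 1) = (p - 1).choose n * (p - (n + 1)) := by
      have := Nat.choose_succ_right_eq (p - 1) n
      rw [Nat.sub_sub, Nat.add_comm 1 n] at this
      rw [← Nat.cast_add_one n, ← Nat.cast_sub hn.le]
      exact_mod_cast this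
    have h2 : ((n : ℚ) + 1) ≠ 0 := by positivity
    have hsucc : harmonicBelow ℚ (n + 1 + 1) = harmonicBelow ℚ (n + 1) + ((n + 1 : ℕ) : ℚ)⁻¹ :=
      sum_range_succ _ _
    rw [← mul_left_inj' h2, hrec, h, hsucc]
    push_cast
    field_simp
    ring

theorem two_mul_fermatQ_expansion {p : ℕ} [Fact p.Prime] :
    ∃ (c : ℚ) (z : ZMod p), ReducesTo p c z ∧
      2 * fermatQ p = -altHarmonic ℚ p + p * altDoubleHarmonic ℚ p + p ^ 2 * c := by
  have hpos : 0 < p := (Fact.out : p.Prime).pos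
  have hp0 : (p : ℚ) ≠ 0 := by exact_mod_cast hpos.ne'
  have key : ∀ n : ℕ, ∃ (c : ℚ) (z : ZMod p), n < p → ReducesTo p c z ∧
      (p.choose n : ℚ) = (if n = 0 then 1 else 0) + p * (-((-1) ^ n * (n : ℚ)⁻¹) +
        p * ((-1) ^ n * (n : ℚ)⁻¹ * harmonicBelow ℚ n) + p ^ 2 * c) := by
    intro n
    by_cases hn : n < p
    swap
    · exact ⟨0, 0, fun h => absurd h hn⟩
    rcases n with _ | n
    · exact ⟨0, 0, fun _ => ⟨by simpa using ReducesTo.intCast (p := p) 0, by simp⟩⟩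
    · obtain ⟨c, z, hc, h⟩ := choose_sub_one_expansion (p := p) (n := n) (by omega)
      have hcn := ((ReducesTo.neg_one_pow n).mul (ReducesTo.inv_natCast hn)).mul hc
      refine ⟨_, _, fun _ => ⟨hcn, ?_⟩⟩
      have habs : (p.choose (n + 1) : ℚ) * (n + 1) = p * (p - 1).choose n := by
        have := Nat.add_one_mul_choose_eq (p - 1) n
        rw [Nat.sub_add_cancel hpos] at this
        exact_mod_cast this.symm
      have h2 : ((n : ℚ) + 1) ≠ 0 := by positivity
      rw [← mul_left_inj' h2, habs, h, if_neg (Nat.succ_ne_zero n)]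
      push_cast
      field_simp
      ring
  choose c z hcz using key
  refine ⟨_, _, ReducesTo.sum (range p) fun n hn => (hcz n (mem_range.mp hn)).1, ?_⟩
  have hsum : (2 : ℚ) ^ p = ∑ n ∈ range p, (p.choose n : ℚ) + 1 := by
    have := Nat.sum_range_choose p
    rw [sum_range_succ, Nat.choose_self] at this
    exact_mod_cast this.symm
  rw [sum_congr rfl fun n hn => (hcz n (mem_range.mp hn)).2, sum_add_distrib, sum_ite_eq',
    if_pos (mem_range.mpr hpos), ← mul_sum, sum_add_distrib, sum_add_distrib, sum_neg_distrib,
    ← mul_sum, ← mul_sum] at hsum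
  have hpow : (2 : ℚ) ^ p = 2 * 2 ^ (p - 1) := by
    rw [← pow_succ', Nat.sub_add_cancel hpos]
  rw [fermatQ, altHarmonic, altDoubleHarmonic, mul_div_assoc', div_eq_iff hp0]
  linear_combination hsum - hpow

theorem sum_inv_k_2k_sub_one (p : ℕ) (hp : p.Prime) (hp3 : 3 < p) :
    ratCongr p 2
      (∑ k ∈ Finset.Icc 1 ((p - 1) / 2), 1 / ((k : ℚ) * (2 * k - 1)))
      (4 * fermatQ p - 2 * p * fermatQ p ^ 2) := by
  have : Fact p.Prime := ⟨hp⟩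
  obtain ⟨c, z, hc, hq⟩ := two_mul_fermatQ_expansion (p := p)
  have hodd : 2 * ((p - 1) / 2) + 1 = p := by
    have := hp.eq_two_or_odd
    omega
  have hT := ReducesTo.altDoubleHarmonic (p := p)
  have hpz := ReducesTo.natCast (p := p) p
  have h2q := (ReducesTo.altHarmonic.neg.add (hpz.mul hT)).add ((hpz.mul hpz).mul hc)
  rw [← sq, ← hq, ZMod.natCast_self, zero_mul, zero_mul, zero_mul, add_zero, add_zero] at h2q
  have hhalf := ReducesTo.inv_natCast (p := p) (n := 2) (by omega)
  have hdiff := (hhalf.mul hhalf).mul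
    ((h2q.mul h2q).sub ((ReducesTo.natCast (p := p) 4).mul hT))
  rw [neg_mul_neg, ← sq (altHarmonic (ZMod p) p), altHarmonic_sq hp3,
    Nat.cast_ofNat (R := ZMod p) (n := 4), sub_self, mul_zero] at hdiff
  obtain ⟨d, w, hd, hdr⟩ := hdiff.exists_eq_mul_of_zero
  push_cast at hd
  refine ⟨_, ?_, ((ReducesTo.natCast (p := p) 2).mul (hdr.sub hc)).not_dvd_den⟩
  rw [sum_inv_mul_eq_altHarmonic, hodd]
  push_cast
  linear_combination (-2 : ℚ) * hq + 2 * (p : ℚ) * hd
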